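/- arXiv:2105.06577 — 2 statements merged into one kernel-verified Lean document; each statement's English description precedes it below -/
import Mathlib

section
/- (Equivalence of Definition 1 and Definition 2 of persistent excitation for smooth regressors.) Let Φ : [t₀,∞) → ℝ^N be continuously differentiable with both Φ and Φ' bounded on [t₀,∞). Then the following are equivalent: (i) there exist T > 0 and α > 0 such that for all t ≥ t₀ the matrix ∫_t^{t+T} Φ(τ)Φ(τ)ᵀ dτ − αI is positive semidefinite; (ii) there exist constants T > 0, δ₀ ∈ (0, T] and ε₀ > 0 such that for every t ≥ t₀ and every unit vector w ∈ ℝ^N there exists t₂ with [t₂, t₂+δ₀] ⊆ [t, t+T] and (1/T)·|∫_{t₂}^{t₂+δ₀} Φ(τ)ᵀ w dτ| ≥ ε₀. -/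
open Matrix MeasureTheory Filter intervalIntegral

/-!
Tested on unit vectors `w`, the matrix inequality says that `f = Φ ⬝ᵥ w` has energy
`∫ f ^ 2 ≥ α` on every window of length `T`. If so, `|f| ≥ √(α / T)` somewhere in the window;
since `Φ` is uniformly continuous, `f` stays within half of that value on a subinterval whose
length depends neither on `w` nor on the window, so `f` does not cancel in the integral there.
Conversely, the Cauchy–Schwarz inequality bounds the energy on a window from below by the square
of the integral over any subinterval.
-/

section IntervalIntegral

variable {f : ℝ → ℝ} {a b c d : ℝ}

lemma sq_integral_le_mul_integral_sq (hab : a ≤ b) (hf : IntervalIntegrable f volume a b)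
    (hf_sq : IntervalIntegrable (fun x => f x ^ 2) volume a b) :
    (∫ x in a..b, f x) ^ 2 ≤ (b - a) * ∫ x in a..b, f x ^ 2 := by
  rcases hab.eq_or_lt with rfl | hab
  · simp
  have hlen : 0 < b - a := sub_pos.2 hab
  have jensen : (⨍ x in a..b, f x) ^ 2 ≤ ⨍ x in a..b, f x ^ 2 :=
    even_two.convexOn_pow.map_set_average_le (continuous_pow 2).continuousOn isClosed_univ
      (by simp [Set.uIoc_of_le hab.le, hab]) (by simp) (by simp) hf.def' hf_sq.def'
  rw [interval_average_eq_div, interval_average_eq_div, div_pow,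
    div_le_div_iff₀ (by positivity) hlen, sq (b - a), ← mul_assoc] at jensen
  linarith [le_of_mul_le_mul_right jensen hlen]

lemma sq_integral_le_mul_integral_sq_of_subinterval (hac : a ≤ c) (hcd : c ≤ d) (hdb : d ≤ b)
    (hf : ContinuousOn f (Set.Icc a b)) :
    (∫ x in c..d, f x) ^ 2 ≤ (d - c) * ∫ x in a..b, f x ^ 2 := by
  have hf_cd : ContinuousOn f (Set.Icc c d) := hf.mono (Set.Icc_subset_Icc hac hdb)
  calc (∫ x in c..d, f x) ^ 2
      ≤ (d - c) * ∫ x in c..d, f x ^ 2 :=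
        sq_integral_le_mul_integral_sq hcd (hf_cd.intervalIntegrable_of_Icc hcd)
          ((hf_cd.pow 2).intervalIntegrable_of_Icc hcd)
    _ ≤ (d - c) * ∫ x in a..b, f x ^ 2 := by
        refine mul_le_mul_of_nonneg_left ?_ (sub_nonneg.2 hcd)
        exact integral_mono_interval hac hcd hdb (Eventually.of_forall fun x => sq_nonneg (f x))
          ((hf.pow 2).intervalIntegrable_of_Icc (hac.trans (hcd.trans hdb)))

lemma exists_le_abs_of_mul_sq_le_integral_sq {s : ℝ} (hab : a < b)
    (hf : ContinuousOn f (Set.Icc a b)) (hs : (b - a) * s ^ 2 ≤ ∫ x in a..b, f x ^ 2) :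
    ∃ p ∈ Set.Icc a b, s ≤ |f p| := by
  have hf_sq : ContinuousOn (fun x => f x ^ 2) (Set.uIcc a b) := by
    rw [Set.uIcc_of_le hab.le]
    exact hf.pow 2
  obtain ⟨p, hp, hfp⟩ := exists_eq_interval_average hab.ne hf_sq
  refine ⟨p, ?_, le_trans (le_abs_self s) (sq_le_sq.1 ?_)⟩
  · rw [← Set.uIcc_of_le hab.le]
    exact Set.Ioo_subset_Icc_self hp
  · rw [hfp, interval_average_eq_div, le_div_iff₀ (sub_pos.2 hab)]
    linarith

lemma mul_norm_sub_le_norm_integral {E : Type*} [NormedAddCommGroup E] [NormedSpace ℝ E]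
    [CompleteSpace E] {g : ℝ → E} {v : E} {η : ℝ} (hab : a ≤ b)
    (hg : IntervalIntegrable g volume a b) (hgv : ∀ x ∈ Set.Ioc a b, ‖g x - v‖ ≤ η) :
    (b - a) * (‖v‖ - η) ≤ ‖∫ x in a..b, g x‖ := by
  have hlen : 0 ≤ b - a := sub_nonneg.2 hab
  have hdev : ‖(∫ x in a..b, g x) - (b - a) • v‖ ≤ η * (b - a) := by
    rw [← intervalIntegral.integral_const, ← integral_sub hg intervalIntegrable_const]
    rw [← Set.uIoc_of_le hab] at hgv
    simpa only [abs_of_nonneg hlen] using norm_integral_le_of_norm_le_const hgv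
  have hv : ‖(b - a) • v‖ = (b - a) * ‖v‖ := norm_smul_of_nonneg hlen v
  linarith [norm_le_norm_add_norm_sub (∫ x in a..b, g x) ((b - a) • v)]

lemma exists_subinterval_mem {p δ : ℝ} (hp : p ∈ Set.Icc a b) (hδ : 0 ≤ δ) (hδab : a + δ ≤ b) :
    ∃ c, a ≤ c ∧ c + δ ≤ b ∧ p ∈ Set.Icc c (c + δ) := by
  refine ⟨max a (p - δ), le_max_left _ _, ?_, max_le hp.1 (by linarith), ?_⟩
  · rw [max_add, sub_add_cancel]
    exact max_le hδab hp.2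
  · linarith [le_max_right a (p - δ)]

lemma exists_subinterval_le_abs_integral {s δ : ℝ} (hab : a < b) (hδ : 0 ≤ δ) (hδab : a + δ ≤ b)
    (hf : ContinuousOn f (Set.Icc a b))
    (hosc : ∀ x ∈ Set.Icc a b, ∀ y ∈ Set.Icc a b, dist x y ≤ δ → |f x - f y| ≤ s / 2)
    (henergy : (b - a) * s ^ 2 ≤ ∫ x in a..b, f x ^ 2) :
    ∃ c, a ≤ c ∧ c + δ ≤ b ∧ δ * (s / 2) ≤ |∫ x in c..(c + δ), f x| := by
  obtain ⟨p, hp, hsp⟩ := exists_le_abs_of_mul_sq_le_integral_sq hab hf henergy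
  obtain ⟨c, hac, hcb, hpc⟩ := exists_subinterval_mem hp hδ hδab
  have hcδ : c ≤ c + δ := le_add_of_nonneg_right hδ
  have hsub : Set.Icc c (c + δ) ⊆ Set.Icc a b := Set.Icc_subset_Icc hac hcb
  have hnear : ∀ x ∈ Set.Ioc c (c + δ), ‖f x - f p‖ ≤ s / 2 := fun x hx => by
    refine hosc x (hsub (Set.Ioc_subset_Icc_self hx)) p hp ?_
    simpa using Real.dist_le_of_mem_Icc (Set.Ioc_subset_Icc_self hx) hpc
  refine ⟨c, hac, hcb, ?_⟩
  calc δ * (s / 2) ≤ (c + δ - c) * (‖f p‖ - s / 2) := by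
        rw [add_sub_cancel_left, Real.norm_eq_abs]
        gcongr
        linarith
    _ ≤ |∫ x in c..(c + δ), f x| :=
        mul_norm_sub_le_norm_integral hcδ ((hf.mono hsub).intervalIntegrable_of_Icc hcδ) hnear

end IntervalIntegral

section EuclideanNorm

variable {ι : Type*} [Fintype ι]

lemma norm_toLp_two_eq_sqrt_sum_sq (v : ι → ℝ) : ‖WithLp.toLp 2 v‖ = √(∑ i, v i ^ 2) := by
  simp [EuclideanSpace.norm_eq]

lemma norm_le_sqrt_sum_sq (v : ι → ℝ) : ‖v‖ ≤ √(∑ i, v i ^ 2) := by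
  rw [← norm_toLp_two_eq_sqrt_sum_sq]
  exact (pi_norm_le_iff_of_nonneg (norm_nonneg _)).2 (PiLp.norm_apply_le (WithLp.toLp 2 v))

lemma abs_dotProduct_le_norm_mul_norm (v w : ι → ℝ) :
    |v ⬝ᵥ w| ≤ ‖WithLp.toLp 2 v‖ * ‖WithLp.toLp 2 w‖ := by
  simpa [EuclideanSpace.inner_toLp_toLp, dotProduct_comm] using
    abs_real_inner_le_norm (WithLp.toLp 2 v) (WithLp.toLp 2 w)

lemma continuousOn_dotProduct_const {X R : Type*} [TopologicalSpace X] [TopologicalSpace R]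
    [NonUnitalNonAssocSemiring R] [IsTopologicalSemiring R] {Φ : X → ι → R} {S : Set X}
    (hΦ : ContinuousOn Φ S) (w : ι → R) : ContinuousOn (fun x => Φ x ⬝ᵥ w) S :=
  (continuous_id.dotProduct continuous_const).comp_continuousOn hΦ

lemma exists_modulus_dotProduct_unit {X : Type*} [PseudoMetricSpace X] {Φ : X → ι → ℝ}
    {S : Set X} (hΦ : UniformContinuousOn Φ S) {η : ℝ} (hη : 0 < η) :
    ∃ δ > 0, ∀ w : ι → ℝ, √(∑ i, w i ^ 2) = 1 →
      ∀ x ∈ S, ∀ y ∈ S, dist x y ≤ δ → |Φ x ⬝ᵥ w - Φ y ⬝ᵥ w| ≤ η := by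
  have hΦ₂ : UniformContinuousOn (fun x => WithLp.toLp 2 (Φ x)) S :=
    (PiLp.uniformContinuous_toLp 2 fun _ : ι => ℝ).comp_uniformContinuousOn hΦ
  obtain ⟨δ, hδ, hmod⟩ := Metric.uniformContinuousOn_iff_le.1 hΦ₂ η hη
  refine ⟨δ, hδ, fun w hw x hx y hy hxy => ?_⟩
  calc |Φ x ⬝ᵥ w - Φ y ⬝ᵥ w| = |(Φ x - Φ y) ⬝ᵥ w| := by rw [sub_dotProduct]
    _ ≤ ‖WithLp.toLp 2 (Φ x - Φ y)‖ * ‖WithLp.toLp 2 w‖ := abs_dotProduct_le_norm_mul_norm _ _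
    _ = dist (WithLp.toLp 2 (Φ x)) (WithLp.toLp 2 (Φ y)) := by
        rw [norm_toLp_two_eq_sqrt_sum_sq w, hw, mul_one, WithLp.toLp_sub, dist_eq_norm]
    _ ≤ η := hmod x hx y hy hxy

lemma uniformContinuousOn_of_sqrt_sum_sq_deriv_le {Φ Φ' : ℝ → ι → ℝ} {S : Set ℝ} {C : ℝ}
    (hS : Convex ℝ S) (hΦ : ∀ t ∈ S, HasDerivWithinAt Φ (Φ' t) S t)
    (hΦ' : ∀ t ∈ S, √(∑ i, Φ' t i ^ 2) ≤ C) : UniformContinuousOn Φ S :=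
  (hS.lipschitzOnWith_of_nnnorm_hasDerivWithin_le (C := C.toNNReal) hΦ fun t ht =>
    NNReal.le_toNNReal_of_coe_le ((norm_le_sqrt_sum_sq _).trans (hΦ' t ht))).uniformContinuousOn

end EuclideanNorm

section Gramian

variable {ι : Type*} {Φ : ℝ → ι → ℝ} {a b α : ℝ}

lemma posSemidef_sub_smul_one_iff [Fintype ι] [DecidableEq ι] {A : Matrix ι ι ℝ}
    (hA : A.IsHermitian) :
    (A - α • (1 : Matrix ι ι ℝ)).PosSemidef ↔
      ∀ w : ι → ℝ, √(∑ i, w i ^ 2) = 1 → α ≤ w ⬝ᵥ A *ᵥ w := by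
  have quadForm (x : ι → ℝ) :
      star x ⬝ᵥ (A - α • (1 : Matrix ι ι ℝ)) *ᵥ x = x ⬝ᵥ A *ᵥ x - α * ∑ i, x i ^ 2 := by
    rw [star_trivial, sub_mulVec, smul_mulVec, one_mulVec, dotProduct_sub, dotProduct_smul]
    simp only [dotProduct, smul_eq_mul, sq]
  constructor
  · intro hpos w hw
    have := hpos.dotProduct_mulVec_nonneg w
    rw [quadForm, Real.sqrt_eq_one.1 hw] at this
    linarith
  · intro hunit
    refine .of_dotProduct_mulVec_nonneg
      (hA.sub (isHermitian_one.smul (IsSelfAdjoint.all α))) fun x => ?_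
    rw [quadForm, sub_nonneg]
    rcases eq_or_ne x 0 with rfl | hx
    · simp
    set r := √(∑ i, x i ^ 2)
    have hr_sq : r ^ 2 = ∑ i, x i ^ 2 := Real.sq_sqrt (by positivity)
    have hr_pos : 0 < r := (norm_pos_iff.2 hx).trans_le (norm_le_sqrt_sum_sq x)
    have hscaled := hunit (r⁻¹ • x) (by
      simp only [Pi.smul_apply, smul_eq_mul, mul_pow, ← Finset.mul_sum, ← hr_sq]
      rw [← mul_pow, inv_mul_cancel₀ hr_pos.ne', one_pow, Real.sqrt_one])
    rw [mulVec_smul, dotProduct_smul, smul_dotProduct, smul_eq_mul, smul_eq_mul, ← mul_assoc,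
      ← mul_inv, ← sq, inv_mul_eq_div, le_div_iff₀ (by positivity)] at hscaled
    rwa [← hr_sq]

/-- The Gram matrix `∫ Φ Φᵀ` of the coordinates of the regressor `Φ` over the window from `a`
to `b`, with the integral taken entrywise. -/
noncomputable def windowGramian (Φ : ℝ → ι → ℝ) (a b : ℝ) : Matrix ι ι ℝ :=
  Matrix.of fun i j => ∫ τ in a..b, Φ τ i * Φ τ j

lemma isHermitian_windowGramian : (windowGramian Φ a b).IsHermitian := by
  ext i j
  simp only [windowGramian, conjTranspose_apply, of_apply, star_trivial, mul_comm]

lemma dotProduct_windowGramian_mulVec [Fintype ι]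
    (hΦ : ∀ i j, IntervalIntegrable (fun τ => Φ τ i * Φ τ j) volume a b) (w : ι → ℝ) :
    w ⬝ᵥ windowGramian Φ a b *ᵥ w = ∫ τ in a..b, (Φ τ ⬝ᵥ w) ^ 2 := by
  have expand (τ : ℝ) : (Φ τ ⬝ᵥ w) ^ 2 = ∑ i, ∑ j, w i * (Φ τ i * Φ τ j * w j) := by
    rw [sq, dotProduct, Finset.sum_mul_sum]
    exact Finset.sum_congr rfl fun i _ => Finset.sum_congr rfl fun j _ => by ring
  have hterm (i j : ι) :
      IntervalIntegrable (fun τ => w i * (Φ τ i * Φ τ j * w j)) volume a b :=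
    ((hΦ i j).mul_const (w j)).const_mul (w i)
  simp_rw [expand]
  rw [integral_finsetSum fun i _ => by
    simpa only [Finset.sum_fn] using IntervalIntegrable.sum _ fun j _ => hterm i j]
  simp_rw [integral_finsetSum fun j _ => hterm _ j, intervalIntegral.integral_const_mul,
    intervalIntegral.integral_mul_const]
  simp only [windowGramian, dotProduct, mulVec, of_apply, Finset.mul_sum]

lemma posSemidef_windowGramian_sub_smul_one_iff [Fintype ι] [DecidableEq ι] (hab : a ≤ b)
    (hΦ : ContinuousOn Φ (Set.Icc a b)) :
    (windowGramian Φ a b - α • (1 : Matrix ι ι ℝ)).PosSemidef ↔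
      ∀ w : ι → ℝ, √(∑ i, w i ^ 2) = 1 → α ≤ ∫ τ in a..b, (Φ τ ⬝ᵥ w) ^ 2 := by
  have hcoord := continuousOn_pi.1 hΦ
  have hprod (i j : ι) : IntervalIntegrable (fun τ => Φ τ i * Φ τ j) volume a b :=
    ((hcoord i).mul (hcoord j)).intervalIntegrable_of_Icc hab
  simp_rw [posSemidef_sub_smul_one_iff isHermitian_windowGramian,
    dotProduct_windowGramian_mulVec hprod]

end Gramian

section PersistentExcitation

variable {ι : Type*} [Fintype ι] {Φ : ℝ → ι → ℝ} {t₀ : ℝ}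

/-- Persistent excitation of `Φ` on `[t₀, ∞)` in matrix form (Definition 1): the Gram matrices over
windows of some fixed length are bounded below by a positive multiple of the identity. -/
def IsPersistentlyExciting [DecidableEq ι] (Φ : ℝ → ι → ℝ) (t₀ : ℝ) : Prop :=
  ∃ T > (0 : ℝ), ∃ α > (0 : ℝ), ∀ t ∈ Set.Ici t₀,
    (windowGramian Φ t (t + T) - α • (1 : Matrix ι ι ℝ)).PosSemidef

/-- Persistent excitation of `Φ` on `[t₀, ∞)` in subinterval form (Definition 2): in every direction
`w`, every window of length `T` contains an interval of length `δ₀` over which `Φ ⬝ᵥ w` has a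
uniformly large integral. The condition `‖w‖ = 1` is spelled out because `ι → ℝ` carries the
supremum norm. -/
def IsSubintervalExciting (Φ : ℝ → ι → ℝ) (t₀ : ℝ) : Prop :=
  ∃ T > (0 : ℝ), ∃ δ₀, 0 < δ₀ ∧ δ₀ ≤ T ∧ ∃ ε₀ > (0 : ℝ),
    ∀ t ∈ Set.Ici t₀, ∀ w : ι → ℝ, √(∑ i, w i ^ 2) = 1 →
      ∃ t₂, t ≤ t₂ ∧ t₂ + δ₀ ≤ t + T ∧
        ε₀ ≤ (1 / T) * |∫ τ in t₂..(t₂ + δ₀), Φ τ ⬝ᵥ w|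

lemma IsPersistentlyExciting.isSubintervalExciting [DecidableEq ι]
    (hPE : IsPersistentlyExciting Φ t₀) (hΦ : UniformContinuousOn Φ (Set.Ici t₀)) :
    IsSubintervalExciting Φ t₀ := by
  obtain ⟨T, hT, α, hα, hgram⟩ := hPE
  set s := √(α / T)
  have hs : 0 < s := Real.sqrt_pos.2 (div_pos hα hT)
  have hTs : T * s ^ 2 = α := by rw [Real.sq_sqrt (by positivity), mul_div_cancel₀ α hT.ne']
  obtain ⟨δ, hδ, hmod⟩ := exists_modulus_dotProduct_unit hΦ (half_pos hs)
  have hδ₀ : 0 < min δ T := lt_min hδ hT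
  refine ⟨T, hT, min δ T, hδ₀, min_le_right _ _, 1 / T * (min δ T * (s / 2)), by positivity,
    fun t ht w hw => ?_⟩
  have hwin : Set.Icc t (t + T) ⊆ Set.Ici t₀ := fun x hx => le_trans ht hx.1
  have hΦwin : ContinuousOn Φ (Set.Icc t (t + T)) := hΦ.continuousOn.mono hwin
  have htT : t < t + T := lt_add_of_pos_right t hT
  have henergy : (t + T - t) * s ^ 2 ≤ ∫ τ in t..(t + T), (Φ τ ⬝ᵥ w) ^ 2 := by
    rw [add_sub_cancel_left, hTs]
    exact (posSemidef_windowGramian_sub_smul_one_iff htT.le hΦwin).1 (hgram t ht) w hw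
  obtain ⟨t₂, htt₂, ht₂T, hint⟩ := exists_subinterval_le_abs_integral htT hδ₀.le
    (by gcongr; exact min_le_right _ _) (continuousOn_dotProduct_const hΦwin w)
    (fun x hx y hy hxy => hmod w hw x (hwin hx) y (hwin hy) (hxy.trans (min_le_left _ _))) henergy
  exact ⟨t₂, htt₂, ht₂T, by gcongr⟩

lemma IsSubintervalExciting.isPersistentlyExciting [DecidableEq ι]
    (hSE : IsSubintervalExciting Φ t₀) (hΦ : ContinuousOn Φ (Set.Ici t₀)) :
    IsPersistentlyExciting Φ t₀ := by
  obtain ⟨T, hT, δ, hδ, -, ε, hε, hexc⟩ := hSE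
  refine ⟨T, hT, (T * ε) ^ 2 / δ, by positivity, fun t ht => ?_⟩
  have hΦwin : ContinuousOn Φ (Set.Icc t (t + T)) := hΦ.mono fun x hx => le_trans ht hx.1
  refine (posSemidef_windowGramian_sub_smul_one_iff (by linarith) hΦwin).2 fun w hw => ?_
  obtain ⟨t₂, htt₂, ht₂T, hint⟩ := hexc t ht w hw
  rw [one_div_mul_eq_div, le_div_iff₀' hT] at hint
  rw [div_le_iff₀' hδ]
  calc (T * ε) ^ 2 ≤ |∫ τ in t₂..(t₂ + δ), Φ τ ⬝ᵥ w| ^ 2 := by gcongr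
    _ = (∫ τ in t₂..(t₂ + δ), Φ τ ⬝ᵥ w) ^ 2 := sq_abs _
    _ ≤ (t₂ + δ - t₂) * ∫ τ in t..(t + T), (Φ τ ⬝ᵥ w) ^ 2 :=
        sq_integral_le_mul_integral_sq_of_subinterval htt₂ (by linarith) ht₂T
          (continuousOn_dotProduct_const hΦwin w)
    _ = δ * ∫ τ in t..(t + T), (Φ τ ⬝ᵥ w) ^ 2 := by rw [add_sub_cancel_left]

theorem pe_def1_def2_equiv_general [DecidableEq ι] (hΦ : UniformContinuousOn Φ (Set.Ici t₀)) :
    IsPersistentlyExciting Φ t₀ ↔ IsSubintervalExciting Φ t₀ :=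
  ⟨fun hPE => hPE.isSubintervalExciting hΦ, fun hSE => hSE.isPersistentlyExciting hΦ.continuousOn⟩

end PersistentExcitation

/-- Equivalence of Definition 1 and Definition 2 of persistent
excitation for smooth regressors. For a continuously differentiable `Φ` with `Φ`
and `Φ'` bounded, the matrix (Definition 1) form of persistent excitation is
equivalent to the subinterval (Definition 2) form. -/
theorem pe_def1_def2_equiv
    (N : ℕ) (t₀ : ℝ) (Φ Φ' : ℝ → Fin N → ℝ)
    (hΦdiff : ∀ t ∈ Set.Ici t₀, HasDerivAt Φ (Φ' t) t)
    (hΦ'cont : ContinuousOn Φ' (Set.Ici t₀))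
    (hΦbdd : ∃ C, ∀ t ∈ Set.Ici t₀, Real.sqrt (∑ i, Φ t i ^ 2) ≤ C)
    (hΦ'bdd : ∃ C, ∀ t ∈ Set.Ici t₀, Real.sqrt (∑ i, Φ' t i ^ 2) ≤ C) :
    (∃ T > (0 : ℝ), ∃ α > (0 : ℝ), ∀ t ∈ Set.Ici t₀,
      (Matrix.of (fun i j => ∫ τ in t..(t + T), Φ τ i * Φ τ j) -
        α • (1 : Matrix (Fin N) (Fin N) ℝ)).PosSemidef) ↔
    (∃ T > (0 : ℝ), ∃ δ₀, 0 < δ₀ ∧ δ₀ ≤ T ∧ ∃ ε₀ > (0 : ℝ),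
      ∀ t ∈ Set.Ici t₀, ∀ w : Fin N → ℝ, Real.sqrt (∑ i, w i ^ 2) = 1 →
        ∃ t₂, t ≤ t₂ ∧ t₂ + δ₀ ≤ t + T ∧
          ε₀ ≤ (1 / T) * |∫ τ in t₂..(t₂ + δ₀), Φ τ ⬝ᵥ w|) := by
  obtain ⟨C, hC⟩ := hΦ'bdd
  exact pe_def1_def2_equiv_general (uniformContinuousOn_of_sqrt_sum_sq_deriv_le (convex_Ici t₀)
    (fun t ht => (hΦdiff t ht).hasDerivWithinAt) hC)
end

section
/- (Lyapunov decrease for the high-order-tuner AC-RL error model.) Along any solution of the high-order-tuner error model, the Lyapunov function V(t) = (1/γ)Tr[(Ξ(t)−Θ)ᵀ Λ (Ξ(t)−Θ)] + (1/γ)Tr[(Θ̂(t)−Ξ(t))ᵀ Λ (Θ̂(t)−Ξ(t))] + e(t)ᵀ P e(t) satisfies V'(t) ≤ −‖e(t)‖² − (2β/γ)·Tr[(Θ̂(t)−Ξ(t))ᵀ Λ (Θ̂(t)−Ξ(t))] ≤ 0 for all t ≥ 0. -/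
open Matrix MeasureTheory Filter

/-!
Write `⟪X, Y⟫ = Tr(XᵀΛY)`, `D = Θ̂ - Ξ` and `W = (BᵀPe)Φᵀ`. The input to the error equation enters
`V'` as `2⟪W, Θ̂ - Θ⟫ = 2⟪W, Ξ - Θ⟫ + 2⟪W, D⟫`. The update of `Ξ` cancels the first summand and
doubles the second, whence
`V' = -eᵀQe + 4⟪W, D⟫ - (2β/γ)(1 + μ‖Φ‖²)⟪D, D⟫`.
Cauchy–Schwarz together with `⟪W, W⟫ ≤ ‖Λ‖ ‖PB‖_F² ‖e‖² ‖Φ‖²` and AM–GM bounds `4⟪W, D⟫` by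
`‖e‖² + 4 ‖Λ‖ ‖PB‖_F² ‖Φ‖² ⟪D, D⟫`. Half of `eᵀQe ≥ 2‖e‖²` absorbs the first term, and the
normalization gain `μ` absorbs the second.
-/

section BilinearForms

variable {R : Type*} [CommRing R] {l m n : Type*} [Fintype l] [Fintype m] [Fintype n]

theorem dotProduct_mulVec_comm_of_isSymm {M : Matrix n n R} (hM : M.IsSymm) (x y : n → R) :
    x ⬝ᵥ M *ᵥ y = y ⬝ᵥ M *ᵥ x := by
  simpa only [hM.eq] using dotProduct_transpose_mulVec M x y

theorem two_mul_dotProduct_mulVec_mulVec_of_lyapunov {A P Q : Matrix n n R} (hP : P.IsSymm)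
    (hLyap : Aᵀ * P + P * A = -Q) (x : n → R) :
    2 * (x ⬝ᵥ P *ᵥ A *ᵥ x) = -(x ⬝ᵥ Q *ᵥ x) := by
  have transpose_term : x ⬝ᵥ (Aᵀ * P) *ᵥ x = x ⬝ᵥ P *ᵥ A *ᵥ x := by
    rw [← mulVec_mulVec, dotProduct_transpose_mulVec, dotProduct_comm,
      ← dotProduct_mulVec_comm_of_isSymm hP]
  calc 2 * (x ⬝ᵥ P *ᵥ A *ᵥ x) = x ⬝ᵥ (Aᵀ * P + P * A) *ᵥ x := by
        rw [add_mulVec, dotProduct_add, transpose_term, mulVec_mulVec, two_mul]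
    _ = -(x ⬝ᵥ Q *ᵥ x) := by rw [hLyap, neg_mulVec, dotProduct_neg]

/-- The weighted Frobenius pairing `⟪X, Y⟫ = Tr(XᵀΛY)` on rectangular matrices, in which the
parameter errors of the tuner are measured. -/
def weightedTraceForm (Λ : Matrix m m R) : LinearMap.BilinForm R (Matrix m n R) :=
  LinearMap.mk₂ R (fun X Y => (Xᵀ * Λ * Y).trace)
    (fun X X' Y => by simp only [transpose_add, Matrix.add_mul, trace_add])
    (fun c X Y => by simp only [transpose_smul, Matrix.smul_mul, trace_smul])
    (fun X Y Y' => by simp only [Matrix.mul_add, trace_add])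
    (fun c X Y => by simp only [Matrix.mul_smul, trace_smul])

theorem weightedTraceForm_apply (Λ : Matrix m m R) (X Y : Matrix m n R) :
    weightedTraceForm Λ X Y = (Xᵀ * Λ * Y).trace :=
  rfl

theorem weightedTraceForm_eq_sum_col (Λ : Matrix m m R) (X Y : Matrix m n R) :
    weightedTraceForm Λ X Y = ∑ j, X.col j ⬝ᵥ Λ *ᵥ Y.col j := by
  rw [weightedTraceForm_apply, Matrix.mul_assoc]
  rfl

theorem weightedTraceForm_comm {Λ : Matrix m m R} (hΛ : Λ.IsSymm) (X Y : Matrix m n R) :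
    weightedTraceForm Λ X Y = weightedTraceForm Λ Y X := by
  simp only [weightedTraceForm_eq_sum_col]
  exact Finset.sum_congr rfl fun j _ => dotProduct_mulVec_comm_of_isSymm hΛ _ _

theorem weightedTraceForm_vecMulVec_left (Λ : Matrix m m R) (w : m → R) (φ : n → R)
    (Y : Matrix m n R) :
    weightedTraceForm Λ (vecMulVec w φ) Y = w ⬝ᵥ Λ *ᵥ Y *ᵥ φ := by
  rw [weightedTraceForm_apply, transpose_vecMulVec, Matrix.mul_assoc, vecMulVec_mul,
    trace_vecMulVec, dotProduct_comm, ← dotProduct_mulVec, mulVec_mulVec]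

theorem weightedTraceForm_vecMulVec_self (Λ : Matrix m m R) (w : m → R) (φ : n → R) :
    weightedTraceForm Λ (vecMulVec w φ) (vecMulVec w φ) = (w ⬝ᵥ Λ *ᵥ w) * (φ ⬝ᵥ φ) := by
  rw [weightedTraceForm_vecMulVec_left, vecMulVec_mulVec, op_smul_eq_smul, mulVec_smul,
    dotProduct_smul, smul_eq_mul, mul_comm]

theorem dotProduct_mulVec_input_eq_weightedTraceForm {P : Matrix l l R} (hP : P.IsSymm)
    (B : Matrix l m R) (Λ : Matrix m m R) (Y : Matrix m n R) (x : l → R) (φ : n → R) :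
    x ⬝ᵥ P *ᵥ (B * Λ * Y) *ᵥ φ =
      weightedTraceForm Λ (vecMulVec ((Bᵀ * P) *ᵥ x) φ) Y := by
  calc x ⬝ᵥ P *ᵥ (B * Λ * Y) *ᵥ φ = (B *ᵥ Λ *ᵥ Y *ᵥ φ) ⬝ᵥ P *ᵥ x := by
        rw [dotProduct_mulVec_comm_of_isSymm hP]
        simp only [mulVec_mulVec, Matrix.mul_assoc]
    _ = (Bᵀ * P) *ᵥ x ⬝ᵥ Λ *ᵥ Y *ᵥ φ := by
        rw [← mulVec_mulVec, dotProduct_comm, ← dotProduct_transpose_mulVec, dotProduct_comm]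
    _ = weightedTraceForm Λ (vecMulVec ((Bᵀ * P) *ᵥ x) φ) Y :=
        (weightedTraceForm_vecMulVec_left Λ _ φ Y).symm

end BilinearForms

section Derivatives

variable {𝕜 : Type*} [NontriviallyNormedField 𝕜] {m n : Type*} [Fintype m] [Fintype n]
  {s : Set 𝕜} {t : 𝕜}

theorem hasDerivWithinAt_dotProduct_mulVec_self {P : Matrix n n 𝕜} (hP : P.IsSymm)
    {x : 𝕜 → n → 𝕜} {x' : n → 𝕜} (hx : HasDerivWithinAt x x' s t) :
    HasDerivWithinAt (fun r => x r ⬝ᵥ P *ᵥ x r) (2 * (x t ⬝ᵥ P *ᵥ x')) s t := by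
  have hx_apply := hasDerivWithinAt_pi.1 hx
  have product_rule : HasDerivWithinAt (fun r => x r ⬝ᵥ P *ᵥ x r)
      (x' ⬝ᵥ P *ᵥ x t + x t ⬝ᵥ P *ᵥ x') s t := by
    simp only [dotProduct, mulVec, ← Finset.sum_add_distrib]
    exact HasDerivWithinAt.fun_sum fun i _ => (hx_apply i).fun_mul
      (HasDerivWithinAt.fun_sum fun j _ => (hx_apply j).const_mul (P i j))
  rwa [dotProduct_mulVec_comm_of_isSymm hP x', ← two_mul] at product_rule

theorem hasDerivWithinAt_weightedTraceForm_self {Λ : Matrix m m 𝕜} (hΛ : Λ.IsSymm)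
    {X : 𝕜 → Matrix m n 𝕜} {X' : Matrix m n 𝕜}
    (hX : ∀ i j, HasDerivWithinAt (fun r => X r i j) (X' i j) s t) :
    HasDerivWithinAt (fun r => weightedTraceForm Λ (X r) (X r))
      (2 * weightedTraceForm Λ X' (X t)) s t := by
  rw [weightedTraceForm_comm hΛ]
  simp only [weightedTraceForm_eq_sum_col, Finset.mul_sum]
  exact HasDerivWithinAt.fun_sum fun j _ => hasDerivWithinAt_dotProduct_mulVec_self hΛ
    (hasDerivWithinAt_pi.2 fun i => hX i j)

end Derivatives

section Estimates

variable {l m n : Type*} [Fintype l] [Fintype m] [Fintype n]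

theorem weightedTraceForm_self_nonneg {Λ : Matrix m m ℝ} (hΛ : Λ.PosSemidef)
    (X : Matrix m n ℝ) : 0 ≤ weightedTraceForm Λ X X := by
  rw [weightedTraceForm_eq_sum_col]
  exact Finset.sum_nonneg fun j _ => hΛ.dotProduct_mulVec_nonneg (X.col j)

theorem weightedTraceForm_sq_le {Λ : Matrix m m ℝ} (hΛ : Λ.PosSemidef) (X Y : Matrix m n ℝ) :
    weightedTraceForm Λ X Y ^ 2 ≤ weightedTraceForm Λ X X * weightedTraceForm Λ Y Y :=
  LinearMap.BilinForm.apply_sq_le_of_symm _ (weightedTraceForm_self_nonneg hΛ)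
    ⟨weightedTraceForm_comm (isHermitian_iff_isSymm.1 hΛ.isHermitian)⟩ X Y

theorem dotProduct_mulVec_self_le_opNorm_mul [DecidableEq n] (A : Matrix n n ℝ) (x : n → ℝ) :
    x ⬝ᵥ A *ᵥ x ≤ ‖toEuclideanCLM (𝕜 := ℝ) A‖ * (x ⬝ᵥ x) := by
  set v : EuclideanSpace ℝ n := WithLp.toLp 2 x
  have norm_sq_eq : ‖v‖ ^ 2 = x ⬝ᵥ x := by
    rw [EuclideanSpace.real_norm_sq_eq]
    exact Finset.sum_congr rfl fun i _ => sq (x i)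
  calc x ⬝ᵥ A *ᵥ x = inner ℝ v (toEuclideanCLM (𝕜 := ℝ) A v) := (inner_toEuclideanCLM A v v).symm
    _ ≤ ‖v‖ * ‖toEuclideanCLM (𝕜 := ℝ) A v‖ := real_inner_le_norm _ _
    _ ≤ ‖v‖ * (‖toEuclideanCLM (𝕜 := ℝ) A‖ * ‖v‖) := by
        gcongr
        exact ContinuousLinearMap.le_opNorm _ _
    _ = ‖toEuclideanCLM (𝕜 := ℝ) A‖ * (x ⬝ᵥ x) := by rw [← norm_sq_eq]; ring

theorem mulVec_dotProduct_self_le_frobenius_sq_mul (A : Matrix m n ℝ) (x : n → ℝ) :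
    A *ᵥ x ⬝ᵥ A *ᵥ x ≤ (∑ i, ∑ j, A i j ^ 2) * (x ⬝ᵥ x) := by
  simp only [dotProduct, mulVec, ← sq, Finset.sum_mul]
  refine Finset.sum_le_sum fun i _ => ?_
  simpa only [Finset.sum_mul] using Finset.sum_mul_sq_le_sq_mul_sq Finset.univ (A i) x

theorem mul_dotProduct_self_le_of_posSemidef_sub_smul_one [DecidableEq n] {Q : Matrix n n ℝ} {c : ℝ}
    (hQ : (Q - c • 1).PosSemidef) (x : n → ℝ) : c * (x ⬝ᵥ x) ≤ x ⬝ᵥ Q *ᵥ x := by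
  have nonneg : 0 ≤ x ⬝ᵥ (Q - c • 1) *ᵥ x := hQ.dotProduct_mulVec_nonneg x
  rw [sub_mulVec, smul_mulVec, one_mulVec, dotProduct_sub, dotProduct_smul, smul_eq_mul] at nonneg
  linarith

theorem four_mul_le_add_of_sq_le_mul {a b x : ℝ} (ha : 0 ≤ a) (hb : 0 ≤ b) (hx : x ^ 2 ≤ a * b) :
    4 * x ≤ a + 4 * b :=
  le_of_sq_le_sq (by nlinarith [sq_nonneg (a - 4 * b)]) (by positivity)

theorem weightedTraceForm_vecMulVec_mulVec_self_le [DecidableEq m] (Λ : Matrix m m ℝ)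
    (A : Matrix m l ℝ) (x : l → ℝ) (φ : n → ℝ) :
    weightedTraceForm Λ (vecMulVec (A *ᵥ x) φ) (vecMulVec (A *ᵥ x) φ) ≤
      ‖toEuclideanCLM (𝕜 := ℝ) Λ‖ * ((∑ i, ∑ j, A i j ^ 2) * (x ⬝ᵥ x)) * (φ ⬝ᵥ φ) := by
  rw [weightedTraceForm_vecMulVec_self]
  gcongr
  · exact dotProduct_star_self_nonneg φ
  · exact (dotProduct_mulVec_self_le_opNorm_mul Λ _).trans
      (by gcongr; exact mulVec_dotProduct_self_le_frobenius_sq_mul A x)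

theorem four_mul_weightedTraceForm_vecMulVec_mulVec_le [DecidableEq m] {Λ : Matrix m m ℝ}
    (hΛ : Λ.PosSemidef) (A : Matrix m l ℝ) (x : l → ℝ) (φ : n → ℝ) (D : Matrix m n ℝ) :
    4 * weightedTraceForm Λ (vecMulVec (A *ᵥ x) φ) D ≤
      x ⬝ᵥ x + 4 * (‖toEuclideanCLM (𝕜 := ℝ) Λ‖ * (∑ i, ∑ j, A i j ^ 2) *
        ((φ ⬝ᵥ φ) * weightedTraceForm Λ D D)) := by
  have form_nonneg := weightedTraceForm_self_nonneg hΛ D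
  have φ_sq_nonneg : 0 ≤ φ ⬝ᵥ φ := dotProduct_star_self_nonneg φ
  refine four_mul_le_add_of_sq_le_mul (dotProduct_star_self_nonneg x) (by positivity) ?_
  calc weightedTraceForm Λ (vecMulVec (A *ᵥ x) φ) D ^ 2
      ≤ weightedTraceForm Λ (vecMulVec (A *ᵥ x) φ) (vecMulVec (A *ᵥ x) φ) *
          weightedTraceForm Λ D D := weightedTraceForm_sq_le hΛ _ D
    _ ≤ ‖toEuclideanCLM (𝕜 := ℝ) Λ‖ * ((∑ i, ∑ j, A i j ^ 2) * (x ⬝ᵥ x)) * (φ ⬝ᵥ φ) *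
          weightedTraceForm Λ D D := by
        gcongr
        exact weightedTraceForm_vecMulVec_mulVec_self_le Λ A x φ
    _ = _ := by ring

end Estimates

section HighOrderTuner

variable {l m n : Type*} [Fintype l] [Fintype m] [Fintype n]

/-- The Lyapunov function of the high-order tuner, as a function of the parameter error
`X = Ξ - Θ`, the filter error `D = Θ̂ - Ξ` and the tracking error `x = e`. -/
noncomputable def tunerLyapunov (P : Matrix l l ℝ) (Λ : Matrix m m ℝ) (γ : ℝ)
    (X D : Matrix m n ℝ) (x : l → ℝ) : ℝ :=
  1 / γ * weightedTraceForm Λ X X + 1 / γ * weightedTraceForm Λ D D + x ⬝ᵥ P *ᵥ x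

theorem hasDerivWithinAt_tunerLyapunov {A Q P : Matrix l l ℝ} {B : Matrix l m ℝ}
    (hP : P.IsSymm) (hLyap : Aᵀ * P + P * A = -Q) {Λ : Matrix m m ℝ} (hΛ : Λ.IsSymm)
    {Θ : Matrix m n ℝ} {γ β μ : ℝ} (hγ : γ ≠ 0) {φ : n → ℝ} {e : ℝ → l → ℝ}
    {Θh Ξ : ℝ → Matrix m n ℝ} {s : Set ℝ} {t : ℝ}
    (he : HasDerivWithinAt e (A *ᵥ e t + (B * Λ * (Θh t - Θ)) *ᵥ φ) s t)
    (hΞ : ∀ i j, HasDerivWithinAt (fun r => Ξ r i j) (-γ * (((Bᵀ * P) *ᵥ e t) i * φ j)) s t)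
    (hΘh : ∀ i j, HasDerivWithinAt (fun r => Θh r i j)
      (-β * (Θh t i j - Ξ t i j) * (1 + μ * (φ ⬝ᵥ φ))) s t) :
    HasDerivWithinAt (fun r => tunerLyapunov P Λ γ (Ξ r - Θ) (Θh r - Ξ r) (e r))
      (-(e t ⬝ᵥ Q *ᵥ e t) +
        4 * weightedTraceForm Λ (vecMulVec ((Bᵀ * P) *ᵥ e t) φ) (Θh t - Ξ t) -
        2 * β / γ * (1 + μ * (φ ⬝ᵥ φ)) * weightedTraceForm Λ (Θh t - Ξ t) (Θh t - Ξ t)) s t := by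
  set W := vecMulVec ((Bᵀ * P) *ᵥ e t) φ
  have parameter_deriv := hasDerivWithinAt_weightedTraceForm_self hΛ (X := fun r => Ξ r - Θ)
    (X' := -γ • W) fun i j => (hΞ i j).sub_const (Θ i j)
  have filter_deriv := hasDerivWithinAt_weightedTraceForm_self hΛ (X := fun r => Θh r - Ξ r)
    (X' := (-β * (1 + μ * (φ ⬝ᵥ φ))) • (Θh t - Ξ t) + γ • W) fun i j =>
      ((hΘh i j).fun_sub (hΞ i j)).congr_deriv (by
        simp only [W, Matrix.add_apply, Matrix.smul_apply, Matrix.sub_apply, vecMulVec_apply,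
          smul_eq_mul]
        ring)
  have tracking_deriv := hasDerivWithinAt_dotProduct_mulVec_self hP he
  refine (((parameter_deriv.const_mul (1 / γ)).fun_add
    (filter_deriv.const_mul (1 / γ))).fun_add tracking_deriv).congr_deriv ?_
  have input_split : weightedTraceForm Λ W (Θh t - Θ) =
      weightedTraceForm Λ W (Ξ t - Θ) + weightedTraceForm Λ W (Θh t - Ξ t) := by
    rw [← map_add, add_comm, sub_add_sub_cancel]
  rw [mulVec_add, dotProduct_add, mul_add 2, two_mul_dotProduct_mulVec_mulVec_of_lyapunov hP hLyap,
    dotProduct_mulVec_input_eq_weightedTraceForm hP, input_split]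
  simp only [map_add, map_smul, LinearMap.add_apply, LinearMap.smul_apply, smul_eq_mul]
  field_simp
  ring

theorem hot_lyapunov_decrease_general [DecidableEq l] [DecidableEq m]
    {A Q P : Matrix l l ℝ} {B : Matrix l m ℝ} (hP : P.IsSymm) (hLyap : Aᵀ * P + P * A = -Q)
    (hQ : (Q - (2 : ℝ) • 1).PosSemidef) {Λ : Matrix m m ℝ} (hΛ : Λ.PosSemidef)
    {Θ : Matrix m n ℝ} {γ β μ : ℝ} (hγ : 0 < γ) (hβ : 0 < β)
    (hμ : 2 * γ / β * (‖toEuclideanCLM (𝕜 := ℝ) Λ‖ * ∑ i, ∑ j, (P * B) i j ^ 2) ≤ μ)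
    {φ : n → ℝ} {e : ℝ → l → ℝ} {Θh Ξ : ℝ → Matrix m n ℝ} {s : Set ℝ} {t : ℝ}
    (he : HasDerivWithinAt e (A *ᵥ e t + (B * Λ * (Θh t - Θ)) *ᵥ φ) s t)
    (hΞ : ∀ i j, HasDerivWithinAt (fun r => Ξ r i j) (-γ * (((Bᵀ * P) *ᵥ e t) i * φ j)) s t)
    (hΘh : ∀ i j, HasDerivWithinAt (fun r => Θh r i j)
      (-β * (Θh t i j - Ξ t i j) * (1 + μ * (φ ⬝ᵥ φ))) s t) :
    ∃ v : ℝ,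
      HasDerivWithinAt (fun r => tunerLyapunov P Λ γ (Ξ r - Θ) (Θh r - Ξ r) (e r)) v s t ∧
      v ≤ -(e t ⬝ᵥ e t) - 2 * β / γ * weightedTraceForm Λ (Θh t - Ξ t) (Θh t - Ξ t) ∧
      -(e t ⬝ᵥ e t) - 2 * β / γ * weightedTraceForm Λ (Θh t - Ξ t) (Θh t - Ξ t) ≤ 0 := by
  refine ⟨_, hasDerivWithinAt_tunerLyapunov hP hLyap (isHermitian_iff_isSymm.1 hΛ.isHermitian)
    hγ.ne' he hΞ hΘh, ?_⟩
  have cross_le := four_mul_weightedTraceForm_vecMulVec_mulVec_le hΛ (Bᵀ * P) (e t) φ (Θh t - Ξ t)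
  have state_le := mul_dotProduct_self_le_of_posSemidef_sub_smul_one hQ (e t)
  have e_sq_nonneg : 0 ≤ e t ⬝ᵥ e t := dotProduct_star_self_nonneg (e t)
  have φ_sq_nonneg : 0 ≤ φ ⬝ᵥ φ := dotProduct_star_self_nonneg φ
  have form_nonneg := weightedTraceForm_self_nonneg hΛ (Θh t - Ξ t)
  have frobenius_transpose : ∑ i, ∑ j, (Bᵀ * P) i j ^ 2 = ∑ i, ∑ j, (P * B) i j ^ 2 := by
    rw [Finset.sum_comm, ← hP.eq, ← transpose_mul, hP.eq]
    rfl
  rw [frobenius_transpose] at cross_le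
  set F := ‖toEuclideanCLM (𝕜 := ℝ) Λ‖ * ∑ i, ∑ j, (P * B) i j ^ 2
  set T := weightedTraceForm Λ (Θh t - Ξ t) (Θh t - Ξ t)
  have gain_le : 4 * F ≤ 2 * β / γ * μ :=
    calc 4 * F = 2 * β / γ * (2 * γ / β * F) := by field_simp; ring
      _ ≤ 2 * β / γ * μ := by gcongr
  have absorbed := mul_le_mul_of_nonneg_right gain_le (mul_nonneg φ_sq_nonneg form_nonneg)
  have dissipation_nonneg : 0 ≤ 2 * β / γ * T := by positivity
  constructor <;> linarith

end HighOrderTuner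

/-- Lyapunov decrease for the high-order-tuner AC-RL error model.
Along any solution of the high-order-tuner error model, the Lyapunov function
`V(t) = (1/γ)Tr[(Ξ−Θ)ᵀΛ(Ξ−Θ)] + (1/γ)Tr[(Θ̂−Ξ)ᵀΛ(Θ̂−Ξ)] + eᵀPe` satisfies
`V'(t) ≤ −‖e‖² − (2β/γ)Tr[(Θ̂−Ξ)ᵀΛ(Θ̂−Ξ)] ≤ 0` for all `t ≥ 0`. -/
theorem hot_lyapunov_decrease
    (n m N : ℕ)
    (AH : Matrix (Fin n) (Fin n) ℝ) (B : Matrix (Fin n) (Fin m) ℝ)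
    (Q P : Matrix (Fin n) (Fin n) ℝ)
    (hQ : Q.PosDef) (hP : P.PosDef)
    (hLyap : AHᵀ * P + P * AH = -Q)
    (hQ2 : (Q - (2 : ℝ) • 1).PosSemidef)
    (Λ : Matrix (Fin m) (Fin m) ℝ) (hΛ : Λ.PosDef)
    (hΛnorm : ‖Matrix.toEuclideanCLM (𝕜 := ℝ) Λ‖ ≤ 1)
    (Θ : Matrix (Fin m) (Fin N) ℝ)
    (γ β μ : ℝ) (hγ : 0 < γ) (hβ : 0 < β)
    (hμ : (2 * γ / β) * ∑ i, ∑ j, ((P * B) i j) ^ 2 ≤ μ)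
    (Φ : ℝ → Fin N → ℝ) (hΦ : ContinuousOn Φ (Set.Ici 0))
    (e : ℝ → Fin n → ℝ) (Θh Ξ : ℝ → Matrix (Fin m) (Fin N) ℝ)
    (he : ∀ t ∈ Set.Ici (0 : ℝ),
      HasDerivAt e (AH.mulVec (e t) + (B * Λ * (Θh t - Θ)).mulVec (Φ t)) t)
    (hΞ : ∀ t ∈ Set.Ici (0 : ℝ), ∀ i j,
      HasDerivAt (fun s => Ξ s i j) (-γ * ((Bᵀ * P).mulVec (e t) i * Φ t j)) t)
    (hΘh : ∀ t ∈ Set.Ici (0 : ℝ), ∀ i j,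
      HasDerivAt (fun s => Θh s i j)
        (-β * (Θh t i j - Ξ t i j) * (1 + μ * (Φ t ⬝ᵥ Φ t))) t) :
    ∀ t ∈ Set.Ici (0 : ℝ), ∃ v : ℝ,
      HasDerivAt
        (fun s => (1 / γ) * ((Ξ s - Θ)ᵀ * Λ * (Ξ s - Θ)).trace +
          (1 / γ) * ((Θh s - Ξ s)ᵀ * Λ * (Θh s - Ξ s)).trace +
          e s ⬝ᵥ P.mulVec (e s)) v t ∧
      v ≤ -(e t ⬝ᵥ e t) - (2 * β / γ) * ((Θh t - Ξ t)ᵀ * Λ * (Θh t - Ξ t)).trace ∧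
      -(e t ⬝ᵥ e t) - (2 * β / γ) * ((Θh t - Ξ t)ᵀ * Λ * (Θh t - Ξ t)).trace ≤ 0 := by
  intro t ht
  have hμ' : 2 * γ / β * (‖toEuclideanCLM (𝕜 := ℝ) Λ‖ * ∑ i, ∑ j, (P * B) i j ^ 2) ≤ μ :=
    hμ.trans' (by gcongr; exact mul_le_of_le_one_left (by positivity) hΛnorm)
  obtain ⟨v, hv, hle⟩ := hot_lyapunov_decrease_general (s := Set.univ)
    (isHermitian_iff_isSymm.1 hP.isHermitian) hLyap hQ2 hΛ.posSemidef hγ hβ hμ'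
    (he t ht).hasDerivWithinAt (fun i j => (hΞ t ht i j).hasDerivWithinAt)
    (fun i j => (hΘh t ht i j).hasDerivWithinAt)
  exact ⟨v, hasDerivWithinAt_univ.1 hv, hle⟩
end
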